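/- Let N = {q : ℚ | ∃ m n p : ℤ, q = 2^m·3^n·5^p}, S_N = {1, 9/8, 5/4, 4/3, 3/2, 5/3, 15/8, 2}, and S₂ = {1, 9/8, 5/4, 81/64, 4/3, 45/32, 3/2, 25/16, 5/3, 27/16, 15/8, 2}. Then S₂ is the smallest subset of ℚ containing S_N that is mean-closed with respect to N: (a) S_N ⊆ S₂; (b) for all a, b ∈ S₂, if (a+b)/2 ∈ N then (a+b)/2 ∈ S₂; (c) every subset S ⊆ ℚ with S_N ⊆ S satisfying the closure property (b) contains S₂. -/

import Mathlib

/-- The set of natural (5-limit) sounds. -/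
def naturalSounds : Set ℚ := {q : ℚ | ∃ m n p : ℤ, q = 2 ^ m * 3 ^ n * 5 ^ p}

/-- Zarlino's natural scale. -/
def naturalScale : Set ℚ := {1, 9/8, 5/4, 4/3, 3/2, 5/3, 15/8, 2}

/-- The scale 𝔖_N^(2) obtained by iterating the generator of means from the natural
scale under the natural restriction. -/
def scaleTwo : Set ℚ :=
  {1, 9/8, 5/4, 81/64, 4/3, 45/32, 3/2, 25/16, 5/3, 27/16, 15/8, 2}

/-- A set is mean-closed with respect to the natural sounds when every arithmetic
mean of two of its elements that is a natural sound again belongs to it. -/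
def MeanClosed (S : Set ℚ) : Prop :=
  ∀ a ∈ S, ∀ b ∈ S, (a + b) / 2 ∈ naturalSounds → (a + b) / 2 ∈ S

/-! Over the common denominator `192` the elements of `scaleTwo` have twelve integer numerators, so
the means of two elements are the fractions `n / 384` with `n` a sum of two numerators. Such a
fraction is a natural sound only if `n` has no prime factor other than `2`, `3` and `5`, and the
sums with that property are exactly the doubles of the twelve numerators. Minimality comes from
writing the four new sounds, one after the other, as means of earlier ones. -/

theorem mul_mem_naturalSounds {q r : ℚ} (hq : q ∈ naturalSounds) (hr : r ∈ naturalSounds) :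
    q * r ∈ naturalSounds := by
  obtain ⟨m, n, p, rfl⟩ := hq
  obtain ⟨m', n', p', rfl⟩ := hr
  refine ⟨m + m', n + n', p + p', ?_⟩
  rw [zpow_add₀ two_ne_zero, zpow_add₀ three_ne_zero, zpow_add₀ (by norm_num : (5 : ℚ) ≠ 0)]
  ring

theorem padicValRat_natCast_zpow_of_ne {p r : ℕ} [Fact p.Prime] [Fact r.Prime] (hpr : p ≠ r)
    (m : ℤ) : padicValRat p ((r : ℚ) ^ m) = 0 := by
  rw [padicValRat.zpow, padicValRat.of_nat, padicValNat_primes hpr, Nat.cast_zero, mul_zero]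

theorem padicValRat_eq_zero_of_mem_naturalSounds {p : ℕ} [Fact p.Prime]
    (hp : p ∉ ({2, 3, 5} : Finset ℕ)) {q : ℚ} (hq : q ∈ naturalSounds) : padicValRat p q = 0 := by
  obtain ⟨m, n, k, rfl⟩ := hq
  simp only [Finset.mem_insert, Finset.mem_singleton, not_or] at hp
  obtain ⟨hp2, hp3, hp5⟩ := hp
  have val2 : padicValRat p ((2 : ℚ) ^ m) = 0 := padicValRat_natCast_zpow_of_ne hp2 m
  have val3 : padicValRat p ((3 : ℚ) ^ n) = 0 := padicValRat_natCast_zpow_of_ne hp3 n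
  have val5 : padicValRat p ((5 : ℚ) ^ k) = 0 :=
    have : Fact (Nat.Prime 5) := ⟨Nat.prime_five⟩
    padicValRat_natCast_zpow_of_ne hp5 k
  rw [padicValRat.mul (by positivity) (by positivity),
    padicValRat.mul (by positivity) (by positivity), val2, val3, val5, add_zero, add_zero]

theorem mem_factoredNumbers_of_natCast_mem_naturalSounds {n : ℕ} (hn : (n : ℚ) ∈ naturalSounds) :
    n ∈ Nat.factoredNumbers {2, 3, 5} := by
  have hn0 : n ≠ 0 := by
    rintro rfl
    obtain ⟨m, n, p, h⟩ := hn
    have : (0 : ℚ) < 2 ^ m * 3 ^ n * 5 ^ p := by positivity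
    exact this.ne h
  refine Nat.mem_factoredNumbers'.2 fun p hp hpn ↦ ?_
  have : Fact p.Prime := ⟨hp⟩
  by_contra hp235
  have val_eq_zero : padicValNat p n = 0 := by
    exact_mod_cast padicValRat_eq_zero_of_mem_naturalSounds hp235 hn
  exact (dvd_iff_padicValNat_ne_zero hn0).1 hpn val_eq_zero

/-- The elements of `scaleTwo` multiplied by their least common denominator `192`. -/
def scaleTwoNumerators : Finset ℕ :=
  {192, 216, 240, 243, 256, 270, 288, 300, 320, 324, 360, 384}

theorem mem_scaleTwo_iff {q : ℚ} : q ∈ scaleTwo ↔ ∃ k ∈ scaleTwoNumerators, q = k / 192 := by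
  norm_num [scaleTwo, scaleTwoNumerators]

theorem exists_add_eq_two_mul_of_mem_factoredNumbers :
    ∀ i ∈ scaleTwoNumerators, ∀ j ∈ scaleTwoNumerators,
      i + j ∈ Nat.factoredNumbers {2, 3, 5} → ∃ k ∈ scaleTwoNumerators, i + j = 2 * k := by
  decide +kernel

theorem meanClosed_scaleTwo : MeanClosed scaleTwo := by
  intro a ha b hb hmean
  obtain ⟨i, hi, rfl⟩ := mem_scaleTwo_iff.1 ha
  obtain ⟨j, hj, rfl⟩ := mem_scaleTwo_iff.1 hb
  have h384 : (384 : ℚ) ∈ naturalSounds := ⟨7, 1, 0, by norm_num⟩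
  have hsum : ((i + j : ℕ) : ℚ) ∈ naturalSounds := by
    have hcast : ((i + j : ℕ) : ℚ) = 384 * ((i / 192 + j / 192) / 2) := by push_cast; ring
    exact hcast ▸ mul_mem_naturalSounds h384 hmean
  obtain ⟨k, hk, hijk⟩ := exists_add_eq_two_mul_of_mem_factoredNumbers i hi j hj
    (mem_factoredNumbers_of_natCast_mem_naturalSounds hsum)
  have hijk' : (i + j : ℚ) = 2 * k := by exact_mod_cast hijk
  exact mem_scaleTwo_iff.2 ⟨k, hk, by linear_combination hijk' / 384⟩

theorem MeanClosed.mem_of_add_eq_two_mul {S : Set ℚ} (hS : MeanClosed S) {a b c : ℚ} (ha : a ∈ S)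
    (hb : b ∈ S) (habc : a + b = 2 * c) (hc : c ∈ naturalSounds) : c ∈ S := by
  obtain rfl : (a + b) / 2 = c := by rw [habc, mul_div_cancel_left₀ c two_ne_zero]
  exact hS a ha b hb hc

theorem scaleTwo_subset_of_meanClosed {S : Set ℚ} (hS : naturalScale ⊆ S)
    (hmean : MeanClosed S) : scaleTwo ⊆ S := by
  simp only [naturalScale, Set.insert_subset_iff, Set.singleton_subset_iff] at hS
  obtain ⟨h1, h9_8, h5_4, h4_3, h3_2, h5_3, h15_8, h2⟩ := hS
  have h25_16 : (25/16 : ℚ) ∈ S :=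
    hmean.mem_of_add_eq_two_mul h9_8 h2 (by norm_num) ⟨-4, 0, 2, by norm_num⟩
  have h27_16 : (27/16 : ℚ) ∈ S :=
    hmean.mem_of_add_eq_two_mul h3_2 h15_8 (by norm_num) ⟨-4, 3, 0, by norm_num⟩
  have h45_32 : (45/32 : ℚ) ∈ S :=
    hmean.mem_of_add_eq_two_mul h9_8 h27_16 (by norm_num) ⟨-5, 2, 1, by norm_num⟩
  have h81_64 : (81/64 : ℚ) ∈ S :=
    hmean.mem_of_add_eq_two_mul h9_8 h45_32 (by norm_num) ⟨-6, 4, 0, by norm_num⟩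
  simp only [scaleTwo, Set.insert_subset_iff, Set.singleton_subset_iff]
  exact ⟨h1, h9_8, h5_4, h81_64, h4_3, h45_32, h3_2, h25_16, h5_3, h27_16, h15_8, h2⟩

/-- 𝔖_N^(2) is the smallest subset of ℚ containing Zarlino's natural scale that is
mean-closed with respect to the natural sounds. -/
theorem scaleTwo_smallest_mean_closed :
    naturalScale ⊆ scaleTwo ∧ MeanClosed scaleTwo ∧
    ∀ S : Set ℚ, naturalScale ⊆ S → MeanClosed S → scaleTwo ⊆ S := by
  refine ⟨?_, meanClosed_scaleTwo, fun _ ↦ scaleTwo_subset_of_meanClosed⟩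
  simp [naturalScale, scaleTwo, Set.insert_subset_iff]
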